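/- arXiv:1512.03255 — 2 statements merged into one kernel-verified Lean document; each statement's English description precedes it below -/
import Mathlib

section
/- (Recurrence relation for 2D q-Bernoulli polynomials.) For every n ≥ 1 the following identity of polynomials in x, y holds: [n]_q · B_{n,q}(qx,y) = [n]_q q^{n} x · B_{n−1,q}(x,y) + Σ_{k=1}^{n} [n choose k]_q q^{n−k} (α_k^B + [k]_q β_{k−1}^B y) B_{n−k,q}(x,y), where B_{n,q}(qx,y) denotes the polynomial obtained from B_{n,q}(x,y) by substituting qx for x. -/
noncomputable section

open Finset MvPolynomial

/-- The `q`-integer `[n]_q = 1 + q + ⋯ + q^(n-1)`. -/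
def qInt {K : Type*} [Field K] (q : K) (n : ℕ) : K := ∑ i ∈ Finset.range n, q ^ i

/-- The `q`-factorial `[n]_q! = [1]_q [2]_q ⋯ [n]_q`. -/
def qFact {K : Type*} [Field K] (q : K) (n : ℕ) : K := ∏ k ∈ Finset.range n, qInt q (k + 1)

/-- The `q`-binomial coefficient `[n choose k]_q`. -/
def qChoose {K : Type*} [Field K] (q : K) (n k : ℕ) : K :=
  qFact q n / (qFact q k * qFact q (n - k))

/-- The partial `q`-derivative in the variable `v` (v = 0 is `x`, v = 1 is `y`),
the linear operator determined by `D_{q,x}(x^m y^l) = [m]_q x^(m-1) y^l` and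
`D_{q,y}(x^m y^l) = [l]_q x^m y^(l-1)`. -/
def qDeriv {K : Type*} [Field K] (q : K) (v : Fin 2) (P : MvPolynomial (Fin 2) K) :
    MvPolynomial (Fin 2) K :=
  ∑ m ∈ P.support, monomial (m - Finsupp.single v 1) (P.coeff m * qInt q (m v))

/-- Substitution `x ↦ c·x` in a polynomial in the two variables `x = X 0`, `y = X 1`. -/
def substX {K : Type*} [Field K] (c : K) (P : MvPolynomial (Fin 2) K) :
    MvPolynomial (Fin 2) K :=
  aeval (fun i : Fin 2 => if i = 0 then C c * X 0 else X 1) P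

/-- Substitution `y ↦ c·y` in a polynomial in the two variables `x = X 0`, `y = X 1`. -/
def substY {K : Type*} [Field K] (c : K) (P : MvPolynomial (Fin 2) K) :
    MvPolynomial (Fin 2) K :=
  aeval (fun i : Fin 2 => if i = 0 then X 0 else C c * X 1) P

/-- The 2D `q`-Appell polynomials attached to a coefficient sequence `a`:
`A_{n,q}(x,y) = Σ_{i+j+k=n} ([n]_q!/([i]_q![j]_q![k]_q!)) a_i q^(k(k-1)/2) x^j y^k`. -/
def appell {K : Type*} [Field K] (q : K) (a : ℕ → K) (n : ℕ) : MvPolynomial (Fin 2) K :=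
  ∑ i ∈ Finset.range (n + 1), ∑ j ∈ Finset.range (n + 1 - i),
    monomial (Finsupp.single (0 : Fin 2) j + Finsupp.single (1 : Fin 2) (n - i - j))
      (qFact q n / (qFact q i * qFact q j * qFact q (n - i - j)) * a i *
        q ^ ((n - i - j) * (n - i - j - 1) / 2))

section helpers

variable {K : Type*} [Field K]

lemma aux_qFact_succ (q : K) (n : ℕ) : qFact q (n+1) = qFact q n * qInt q (n+1) := by
  simp [qFact, Finset.prod_range_succ]

lemma aux_qFact_zero (q : K) : qFact q 0 = 1 := by simp [qFact]

lemma aux_qFact_ne (q : K) (hq : ∀ n : ℕ, 1 ≤ n → qInt q n ≠ 0) (n : ℕ) : qFact q n ≠ 0 := by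
  rw [qFact, Finset.prod_ne_zero_iff]
  intro k _
  exact hq _ (by omega)

lemma aux_qInt (q : K) (n : ℕ) : (q - 1) * qInt q n = q ^ n - 1 := by
  rw [qInt, mul_comm, geom_sum_mul]

abbrev PS (K : Type*) [Field K] := PowerSeries (MvPolynomial (Fin 2) K)

def gS (q : K) (a : ℕ → K) : PS K := PowerSeries.mk fun n => C (a n / qFact q n)

def eX (q : K) : PS K := PowerSeries.mk fun n => C (1 / qFact q n) * X 0 ^ n

def eY (q : K) : PS K := PowerSeries.mk fun n => C (q ^ (n * (n-1) / 2) / qFact q n) * X 1 ^ n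

lemma coeff_F (q : K) (hq : ∀ n : ℕ, 1 ≤ n → qInt q n ≠ 0) (a : ℕ → K) (n : ℕ) :
    PowerSeries.coeff n (gS q a * (eX q * eY q)) = C (1 / qFact q n) * appell q a n := by
  rw [PowerSeries.coeff_mul, Finset.Nat.sum_antidiagonal_eq_sum_range_succ_mk, appell,
    Finset.mul_sum]
  refine Finset.sum_congr rfl fun i hi => ?_
  have hi' : i ≤ n := by simpa [Nat.lt_succ_iff] using hi
  rw [PowerSeries.coeff_mul, Finset.Nat.sum_antidiagonal_eq_sum_range_succ_mk, Finset.mul_sum,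
    Finset.mul_sum, show n + 1 - i = (n - i).succ by omega]
  refine Finset.sum_congr rfl fun j hj => ?_
  simp only [gS, eX, eY, PowerSeries.coeff_mk]
  have h1 : (monomial (Finsupp.single (0 : Fin 2) j + Finsupp.single (1 : Fin 2) (n - i - j)))
      (qFact q n / (qFact q i * qFact q j * qFact q (n - i - j)) * a i *
        q ^ ((n - i - j) * (n - i - j - 1) / 2)) =
      C (qFact q n / (qFact q i * qFact q j * qFact q (n - i - j)) * a i *
        q ^ ((n - i - j) * (n - i - j - 1) / 2)) * (X 0 ^ j * X 1 ^ (n - i - j)) := by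
    rw [X_pow_eq_monomial, X_pow_eq_monomial, monomial_mul, C_mul_monomial]
    simp
  rw [h1]
  have h2 : 1 / qFact q n * (qFact q n / (qFact q i * qFact q j * qFact q (n - i - j)) * a i *
        q ^ ((n - i - j) * (n - i - j - 1) / 2)) = a i / qFact q i * (1 / qFact q j) *
        (q ^ ((n - i - j) * (n - i - j - 1) / 2) / qFact q (n - i - j)) := by
    have := aux_qFact_ne q hq
    have := this n
    have := aux_qFact_ne q hq i
    have := aux_qFact_ne q hq j
    have := aux_qFact_ne q hq (n-i-j)
    field_simp
  have h3 := congrArg (C (σ := Fin 2)) h2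
  rw [map_mul C (1 / _), map_mul C (_ * _) (q ^ _ / _), map_mul C (a i / _)] at h3
  linear_combination -(X 0 ^ j * X 1 ^ (n - i - j)) * h3

lemma coeff_gS_mul (q : K) (hq : ∀ n : ℕ, 1 ≤ n → qInt q n ≠ 0) (a : ℕ → K) (n : ℕ) :
    PowerSeries.coeff n (gS q a * gS q 1) =
      C ((∑ j ∈ Finset.range (n+1), qChoose q n j * a j) / qFact q n) := by
  rw [PowerSeries.coeff_mul, Finset.Nat.sum_antidiagonal_eq_sum_range_succ_mk, Finset.sum_div,
    map_sum]
  refine Finset.sum_congr rfl fun i hi => ?_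
  simp only [gS, PowerSeries.coeff_mk, ← C_mul, qChoose, Pi.one_apply]
  congr 1
  have := aux_qFact_ne q hq n
  have := aux_qFact_ne q hq i
  have := aux_qFact_ne q hq (n-i)
  field_simp

lemma rescale_e (q : K) (hq : ∀ n : ℕ, 1 ≤ n → qInt q n ≠ 0) (z : MvPolynomial (Fin 2) K) :
    PowerSeries.rescale (C q) (PowerSeries.mk fun n => C (1 / qFact q n) * z ^ n : PS K) =
     (1 + PowerSeries.C (C (q - 1) * z) * PowerSeries.X) *
      (PowerSeries.mk fun n => C (1 / qFact q n) * z ^ n) := by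
  ext1 n
  rw [add_mul, one_mul, map_add, mul_assoc, PowerSeries.coeff_C_mul, PowerSeries.coeff_rescale]
  cases n with
  | zero => simp
  | succ n =>
    rw [PowerSeries.coeff_succ_X_mul]
    simp only [PowerSeries.coeff_mk]
    have h : q ^ (n+1) * (1 / qFact q (n+1)) = 1 / qFact q (n+1) + (q - 1) * (1 / qFact q n) := by
      have h1 := aux_qFact_ne q hq n
      have h2 := hq (n+1) (by omega)
      have h3 := aux_qInt q (n+1)
      rw [aux_qFact_succ]
      field_simp
      linear_combination -h3
    have h' := congrArg (C (σ := Fin 2)) h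
    simp only [C_mul, C_add, C_pow] at h' ⊢
    linear_combination z ^ (n+1) * h'

lemma rescale_E (q : K) (hq : ∀ n : ℕ, 1 ≤ n → qInt q n ≠ 0) :
    eY q = (1 - PowerSeries.C (C (q - 1) * X 1) * PowerSeries.X) *
      PowerSeries.rescale (C q) (eY q) := by
  ext1 n
  rw [sub_mul, one_mul, map_sub, mul_assoc, PowerSeries.coeff_C_mul, PowerSeries.coeff_rescale]
  cases n with
  | zero => simp
  | succ n =>
    rw [PowerSeries.coeff_succ_X_mul, PowerSeries.coeff_rescale]
    simp only [eY, PowerSeries.coeff_mk]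
    have ht : (n + 1) * (n + 1 - 1) / 2 = n * (n - 1) / 2 + n := by
      rw [← Finset.sum_range_id_mul_two, ← Finset.sum_range_id_mul_two]
      simp [Finset.sum_range_succ]
    have h : q ^ ((n + 1) * (n + 1 - 1) / 2) / qFact q (n+1) =
       q ^ (n+1) * (q ^ ((n + 1) * (n + 1 - 1) / 2) / qFact q (n+1)) -
        (q - 1) * (q ^ n * (q ^ (n * (n - 1) / 2) / qFact q n)) := by
      have h1 := aux_qFact_ne q hq n
      have h2 := hq (n+1) (by omega)
      have h3 := aux_qInt q (n+1)
      rw [aux_qFact_succ, ht, pow_add]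
      field_simp
      linear_combination q ^ (n * (n - 1) / 2) * q ^ n * h3
    have h' := congrArg (C (σ := Fin 2)) h
    simp only [C_mul, C_sub, C_pow] at h' ⊢
    linear_combination X 1 ^ (n+1) * h'

lemma gS_one (q : K) : gS q 1 = PowerSeries.mk fun n => C (1 / qFact q n) * 1 ^ n := by
  simp [gS]

def sHom (c : K) : MvPolynomial (Fin 2) K →+* MvPolynomial (Fin 2) K :=
  (aeval (fun i : Fin 2 => if i = 0 then C c * X 0 else X 1) :
    MvPolynomial (Fin 2) K →ₐ[K] MvPolynomial (Fin 2) K)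

lemma sHom_C (c r : K) : sHom c (C r) = C r := by
  simp [sHom, MvPolynomial.algebraMap_eq]

lemma map_F (q : K) (a : ℕ → K) :
    PowerSeries.map (sHom q) (gS q a * (eX q * eY q)) =
      gS q a * (PowerSeries.rescale (C q) (eX q) * eY q) := by
  rw [map_mul, map_mul]
  congr 1
  · ext1 n
    simp only [gS, PowerSeries.coeff_map, PowerSeries.coeff_mk, sHom_C]
  congr 1
  · ext1 n
    simp only [eX, PowerSeries.coeff_map, PowerSeries.coeff_mk, sHom_C, map_mul, map_pow,
      PowerSeries.coeff_rescale]
    simp [sHom]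
    ring
  · ext1 n
    simp only [eY, PowerSeries.coeff_map, PowerSeries.coeff_mk, sHom_C, map_mul, map_pow]
    simp [sHom]

end helpers

/-- Recurrence relation for 2D `q`-Bernoulli polynomials. -/
theorem qBernoulli2D_recurrence
    {K : Type*} [Field K] [CharZero K] (q : K) (hq0 : q ≠ 0) (hq1 : q ≠ 1)
    (hq : ∀ n : ℕ, 1 ≤ n → qInt q n ≠ 0)
    (b : ℕ → K) (hb0 : b 0 = 1)
    (hb : ∀ n : ℕ, 2 ≤ n → ∑ k ∈ Finset.range n, qChoose q n k * b k = 0)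
    (αB βB : ℕ → K)
    (hαB : ∀ k : ℕ, 1 ≤ k → αB k = -(1 / q) * ∑ j ∈ Finset.range (k + 1), qChoose q k j * b j)
    (hβB0 : βB 0 = 1)
    (hβB : ∀ m : ℕ, 1 ≤ m →
      βB m = ((q - 1) / q) * ∑ j ∈ Finset.range (m + 1), qChoose q m j * b j)
    (n : ℕ) (hn : 1 ≤ n) :
    C (qInt q n) * substX q (appell q b n) =
      (∑ k ∈ Finset.Icc 1 n, C (qChoose q n k * q ^ (n - k)) *
        (C (αB k) + C (qInt q k * βB (k - 1)) * X 1) * appell q b (n - k)) +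
      C (qInt q n * q ^ n) * X 0 * appell q b (n - 1) := by
  have hF := aux_qFact_ne q hq
  have hI1 : qInt q 1 = 1 := by simp [qInt]
  set A := gS q b with hA
  set e := gS q 1 with he
  set Q : PS K := PowerSeries.C (C q) with hQ
  set Y : PS K := PowerSeries.C (X 1) with hY
  set Z : PS K := PowerSeries.C (X 0) with hZ
  set t : PS K := PowerSeries.X with ht
  have hCC : ∀ z : MvPolynomial (Fin 2) K, (PowerSeries.C (C (q - 1) * z) : PS K) =
      (Q - 1) * PowerSeries.C z := by
    intro z; simp [hQ]
  have hAe : A * (e - 1) = t := by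
    rw [mul_sub, mul_one]
    ext1 n
    rw [map_sub, coeff_gS_mul q hq, hA, gS, PowerSeries.coeff_mk, ← C_sub, ← sub_div,
      Finset.sum_range_succ]
    have hnn : qChoose q n n = 1 := by
      have := hF n
      simp [qChoose, aux_qFact_zero, this]
    rw [hnn, one_mul, add_sub_cancel_right, ht, PowerSeries.coeff_X]
    rcases n with _ | _ | n
    · simp
    · simp [qChoose, hb0, qFact, hI1]
    · rw [hb _ (by omega)]; simp
  have he' : PowerSeries.rescale (C q) e = (1 + (Q - 1) * t) * e := by
    have := rescale_e q hq 1
    rw [← gS_one, hCC] at this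
    simpa using this
  have hx' := rescale_e q hq (X 0)
  rw [hCC] at hx'
  change PowerSeries.rescale (C q) (eX q) = (1 + (Q - 1) * Z * t) * eX q at hx'
  have hrt : PowerSeries.rescale (C q) t = Q * t := by
    rw [ht, PowerSeries.rescale_X]
  have hrC : ∀ z : MvPolynomial (Fin 2) K,
      PowerSeries.rescale (C q) (PowerSeries.C z : PS K) = PowerSeries.C z := by
    intro z
    ext1 n
    rw [PowerSeries.coeff_rescale, PowerSeries.coeff_C]
    split_ifs with h <;> simp [h]
  have hAe' := congrArg (PowerSeries.rescale (C q)) hAe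
  rw [map_mul, map_sub, map_one, he', hrt] at hAe'
  set A' := PowerSeries.rescale (C q) A with hA'
  have hx'' := congrArg (PowerSeries.rescale (C q)) hx'
  simp only [map_mul, map_add, map_sub, map_one, hrt, hQ, hZ, hrC] at hx''
  rw [← hQ, ← hZ] at hx''
  have hy := rescale_E q hq
  rw [hCC, ← hY, ← ht] at hy
  have hQ0 : Q ≠ 0 := by
    rw [hQ, map_ne_zero_iff _ PowerSeries.C_injective, map_ne_zero_iff _ (C_injective _ _)]
    exact hq0
  set B : PS K := gS q βB with hB
  have hBs : Q * B = 1 + (Q - 1) * (A * e) := by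
    have := hCC 1
    rw [map_one, mul_one, mul_one] at this
    rw [← this]
    ext1 n
    rw [map_add, hQ, PowerSeries.coeff_C_mul, PowerSeries.coeff_C_mul, coeff_gS_mul q hq, hB, gS,
      PowerSeries.coeff_mk, PowerSeries.coeff_one]
    rcases n with _ | n
    · simp [hβB0, aux_qFact_zero, qChoose, hb0]
    · rw [hβB _ (by omega), if_neg (by omega), zero_add, ← C_mul, ← C_mul]
      congr 1
      field_simp
  have he1 : e - 1 ≠ 0 := by
    intro h
    rw [h, mul_zero] at hAe
    exact PowerSeries.X_ne_zero hAe.symm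
  have hBA : B * A' = A := by
    apply mul_left_cancel₀ (mul_ne_zero hQ0 he1)
    linear_combination A' * (e - 1) * hBs + (Q - 1) * A' * e * hAe + hAe' - Q * hAe
  set S : PS K := PowerSeries.mk (fun k => if k = 0 then 0 else
    C (1 / qFact q k) * (C (αB k) + C (qInt q k * βB (k - 1)) * X 1)) with hS
  have hSB : (Q - 1) * S = 1 - B + (Q - 1) * Y * t * B := by
    have := hCC 1
    rw [map_one, mul_one, mul_one] at this
    rw [← this]
    ext1 n
    rw [map_add, map_sub (PowerSeries.coeff n), PowerSeries.coeff_C_mul, hS, PowerSeries.coeff_mk, hY, mul_assoc,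
      mul_assoc, PowerSeries.coeff_C_mul, PowerSeries.coeff_C_mul]
    rcases n with _ | n
    · simp [hB, gS, hβB0, aux_qFact_zero, ht]
    · rw [ht, PowerSeries.coeff_succ_X_mul, if_neg (by omega), hB, gS, PowerSeries.coeff_mk,
        PowerSeries.coeff_mk, PowerSeries.coeff_one, if_neg (by omega), Nat.add_sub_cancel]
      have h1 : (q - 1) * (1 / qFact q (n+1) * αB (n+1)) = - (βB (n+1) / qFact q (n+1)) := by
        rw [hαB _ (by omega), hβB _ (by omega)]
        field_simp
      have h2 : 1 / qFact q (n+1) * (qInt q (n+1) * βB n) = βB n / qFact q n := by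
        rw [aux_qFact_succ]
        have := hF n
        have := hq (n+1) (by omega)
        field_simp
      have h1' := congrArg (C (σ := Fin 2)) h1
      have h2' := congrArg (C (σ := Fin 2)) h2
      rw [C_mul, C_mul, C_neg] at h1'
      rw [C_mul] at h2'
      linear_combination h1' + C (q - 1) * X 1 * h2'
  set G : PS K := A * (PowerSeries.rescale (C q) (eX q) * eY q) with hG
  set F : PS K := A * (eX q * eY q) with hFF
  have main : PowerSeries.rescale (C q) G - G =
      (Q - 1) * (S * PowerSeries.rescale (C q) F + Q * Z * t * PowerSeries.rescale (C q) F) := by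
    rw [hG, hFF]
    simp only [map_mul]
    rw [hx'', ← hA']
    set E' := PowerSeries.rescale (C q) (eY q)
    set x' := PowerSeries.rescale (C q) (eX q)
    rw [hy]
    linear_combination (-A' * x' * E') * hSB + (x' * E' * (1 - (Q - 1) * Y * t)) * hBA
  have hc := congrArg (PowerSeries.coeff n) main
  have hGc : PowerSeries.coeff n G = C (1 / qFact q n) * substX q (appell q b n) := by
    rw [hG, hA, ← map_F, PowerSeries.coeff_map, coeff_F q hq, map_mul, sHom_C]
    rfl
  have hFc : ∀ m, PowerSeries.coeff m F = C (1 / qFact q m) * appell q b m := fun m =>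
    coeff_F q hq b m
  have hsum : PowerSeries.coeff n (S * PowerSeries.rescale (C q) F) = C (1 / qFact q n) *
     (∑ k ∈ Finset.Icc 1 n, C (qChoose q n k * q ^ (n - k)) *
        (C (αB k) + C (qInt q k * βB (k - 1)) * X 1) * appell q b (n - k)) := by
    rw [PowerSeries.coeff_mul, Finset.Nat.sum_antidiagonal_eq_sum_range_succ_mk, Finset.mul_sum,
      Finset.sum_range_succ']
    have hz : PowerSeries.coeff 0 S = 0 := by rw [hS, PowerSeries.coeff_mk, if_pos rfl]
    simp only [hz, zero_mul, add_zero]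
    rw [Finset.range_eq_Ico, Finset.sum_Ico_add' (fun k => PowerSeries.coeff k S *
      PowerSeries.coeff (n - k) (PowerSeries.rescale (C q) F)) 0 n 1]
    refine Finset.sum_congr (by ext; simp) fun k hk => ?_
    have hk1 : k ≠ 0 := by simp at hk; omega
    rw [PowerSeries.coeff_rescale, hFc, hS, PowerSeries.coeff_mk, if_neg hk1]
    have h : 1 / qFact q k * (q ^ (n-k) * (1 / qFact q (n-k))) =
        1 / qFact q n * (qChoose q n k * q ^ (n - k)) := by
      have := hF n
      have := hF k
      have := hF (n-k)
      rw [qChoose]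
      field_simp
    have h' := congrArg (C (σ := Fin 2)) h
    rw [C_mul, C_mul, C_pow, C_mul] at h'
    linear_combination (C (αB k) + C (qInt q k * βB (k - 1)) * X 1) * appell q b (n - k) * h'
  obtain ⟨m, rfl⟩ : ∃ m, n = m + 1 := ⟨n - 1, by omega⟩
  have hlast : PowerSeries.coeff (m+1) (Q * Z * t * PowerSeries.rescale (C q) F) =
      C (1 / qFact q (m+1)) * (C (qInt q (m+1) * q ^ (m+1)) * X 0 * appell q b m) := by
    rw [mul_assoc, mul_assoc, hQ, hZ, ht, PowerSeries.coeff_C_mul, PowerSeries.coeff_C_mul,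
      PowerSeries.coeff_succ_X_mul, PowerSeries.coeff_rescale, hFc]
    have h : q * (q ^ m * (1 / qFact q m)) =
        1 / qFact q (m+1) * (qInt q (m+1) * q ^ (m+1)) := by
      have := hF m
      have := hq (m+1) (by omega)
      rw [aux_qFact_succ]
      field_simp
      ring
    have h' := congrArg (C (σ := Fin 2)) h
    rw [C_mul, C_mul, C_pow, C_mul] at h'
    linear_combination X 0 * appell q b m * h'
  have hQQ := hCC 1
  rw [map_one, mul_one, mul_one] at hQQ
  rw [← hQQ, PowerSeries.coeff_C_mul, map_add, hsum, hlast, map_sub, PowerSeries.coeff_rescale,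
    hGc] at hc
  have hne : (C (q - 1) * C (1 / qFact q (m+1)) : MvPolynomial (Fin 2) K) ≠ 0 := by
    rw [← C_mul, Ne, C_eq_zero]
    exact mul_ne_zero (sub_ne_zero.2 hq1) (one_div_ne_zero (hF _))
  have hqn := congrArg (C (σ := Fin 2)) (aux_qInt q (m+1))
  rw [C_mul, map_sub C (q ^ _) 1, C_pow, C_1] at hqn
  apply mul_left_cancel₀ hne
  rw [Nat.add_sub_cancel]
  linear_combination hc + C (1 / qFact q (m+1)) * substX q (appell q b (m+1)) * hqn
end
end

section
/- (Recurrence relation for 2D q-Euler polynomials.) For every n ≥ 1 the following identity of polynomials in x, y holds: [n]_q · E_{n,q}(qx,y) = [n]_q q^{n} x · E_{n−1,q}(x,y) + Σ_{k=1}^{n} [n choose k]_q q^{n−k} (α_k^E + [k]_q β_{k−1}^E y) E_{n−k,q}(x,y), where E_{n,q}(qx,y) denotes the polynomial obtained from E_{n,q}(x,y) by substituting qx for x. -/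
noncomputable section

open Finset MvPolynomial

theorem qFact_succ' {K : Type*} [Field K] (q : K) (n : ℕ) :
    qFact q (n + 1) = qFact q n * qInt q (n + 1) := by
  simp [qFact, Finset.prod_range_succ]

theorem qFact_zero' {K : Type*} [Field K] (q : K) : qFact q 0 = 1 := by
  simp [qFact]

theorem qInt_geom {K : Type*} [Field K] (q : K) (n : ℕ) :
    (q - 1) * qInt q n = q ^ n - 1 := by
  rw [qInt, mul_comm, geom_sum_mul]

theorem qFact_ne {K : Type*} [Field K] (q : K) (hq : ∀ n : ℕ, 1 ≤ n → qInt q n ≠ 0) (n : ℕ) :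
    qFact q n ≠ 0 := by
  rw [qFact, Finset.prod_ne_zero_iff]
  intro k _
  exact hq _ (by omega)

/-- The q-exponential generating series of `a` in the variable `x t`. -/
def qGen {K : Type*} [Field K] (q : K) (a : ℕ → K) (x : MvPolynomial (Fin 2) K) :
    PowerSeries (MvPolynomial (Fin 2) K) :=
  PowerSeries.mk fun n => C (a n / qFact q n) * x ^ n

theorem rescale_qGen {K : Type*} [Field K] (q c : K) (a : ℕ → K) (x : MvPolynomial (Fin 2) K) :
    PowerSeries.rescale (C c) (qGen q a x) = qGen q a (C c * x) := by
  ext1 n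
  simp only [qGen, PowerSeries.coeff_rescale, PowerSeries.coeff_mk, mul_pow]
  ring

theorem qGen_exp {K : Type*} [Field K] (q : K) (hq : ∀ n : ℕ, 1 ≤ n → qInt q n ≠ 0)
    (x : MvPolynomial (Fin 2) K) :
    qGen q (fun _ => 1) (C q * x) =
      qGen q (fun _ => 1) x * (1 + PowerSeries.C (C (q - 1) * x) * PowerSeries.X) := by
  ext1 n
  rw [mul_add, mul_one, ← mul_assoc, map_add]
  cases n with
  | zero => simp [qGen]
  | succ n =>
    rw [PowerSeries.coeff_succ_mul_X, PowerSeries.coeff_mul_C]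
    simp only [qGen, PowerSeries.coeff_mk, mul_pow, ← map_pow]
    have h : (1 / qFact q (n + 1)) * q ^ (n + 1) =
        1 / qFact q (n + 1) + (1 / qFact q n) * (q - 1) := by
      have h1 := qFact_ne q hq n
      have h2 := hq (n + 1) (by omega)
      have h3 := qInt_geom q (n + 1)
      rw [qFact_succ']
      field_simp
      linear_combination -h3
    have h' := congrArg (C (σ := Fin 2)) h
    simp only [map_add, map_mul] at h'
    linear_combination x ^ (n + 1) * h'

theorem qGen_exp2 {K : Type*} [Field K] (q : K) (hq : ∀ n : ℕ, 1 ≤ n → qInt q n ≠ 0)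
    (x : MvPolynomial (Fin 2) K) :
    qGen q (fun k => q ^ (k * (k - 1) / 2)) x =
      qGen q (fun k => q ^ (k * (k - 1) / 2)) (C q * x) *
        (1 - PowerSeries.C (C (q - 1) * x) * PowerSeries.X) := by
  ext1 n
  rw [mul_sub, mul_one, ← mul_assoc, map_sub]
  cases n with
  | zero => simp [qGen]
  | succ n =>
    rw [PowerSeries.coeff_succ_mul_X, PowerSeries.coeff_mul_C]
    simp only [qGen, PowerSeries.coeff_mk, mul_pow, ← map_pow]
    have e : (n + 1) * (n + 1 - 1) / 2 = n * (n - 1) / 2 + n := by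
      rw [← Finset.sum_range_id_mul_two, ← Finset.sum_range_id_mul_two,
        Finset.sum_range_succ]
      omega
    rw [e]
    generalize n * (n - 1) / 2 = s
    have h : (q ^ (s + n) / qFact q (n + 1)) =
        (q ^ (s + n) / qFact q (n + 1)) * q ^ (n + 1)
          - (q ^ s / qFact q n) * q ^ n * (q - 1) := by
      have h1 := qFact_ne q hq n
      have h2 := hq (n + 1) (by omega)
      have h3 := qInt_geom q (n + 1)
      rw [qFact_succ']
      field_simp
      linear_combination q ^ (s + n) * h3
    have h' := congrArg (C (σ := Fin 2)) h
    simp only [map_sub, map_mul] at h' ⊢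
    linear_combination x ^ (n + 1) * h'

/-- Explicit form of the Appell polynomials with arbitrary arguments. -/
theorem coeff_qGen3 {K : Type*} [Field K] (q : K) (hq : ∀ n : ℕ, 1 ≤ n → qInt q n ≠ 0)
    (a : ℕ → K) (x y : MvPolynomial (Fin 2) K) (n : ℕ) :
    C (qFact q n) * PowerSeries.coeff n (qGen q a 1 *
      (qGen q (fun _ => 1) x * qGen q (fun k => q ^ (k * (k - 1) / 2)) y)) =
    ∑ i ∈ Finset.range (n + 1), ∑ j ∈ Finset.range (n + 1 - i),
      C (qFact q n / (qFact q i * qFact q j * qFact q (n - i - j)) * a i *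
        q ^ ((n - i - j) * (n - i - j - 1) / 2)) * (x ^ j * y ^ (n - i - j)) := by
  rw [PowerSeries.coeff_mul, Finset.Nat.sum_antidiagonal_eq_sum_range_succ_mk, Finset.mul_sum]
  refine Finset.sum_congr rfl fun i hi => ?_
  have hi' : n + 1 - i = (n - i) + 1 := by
    have := Finset.mem_range.1 hi
    omega
  rw [PowerSeries.coeff_mul, Finset.Nat.sum_antidiagonal_eq_sum_range_succ_mk, Finset.mul_sum,
    Finset.mul_sum, hi']
  refine Finset.sum_congr rfl fun j hj => ?_
  simp only [qGen, PowerSeries.coeff_mk, one_pow, mul_one]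
  have h : qFact q n / (qFact q i * qFact q j * qFact q (n - i - j)) * a i *
        q ^ ((n - i - j) * (n - i - j - 1) / 2) =
      qFact q n * ((a i / qFact q i) * ((1 / qFact q j) *
        (q ^ ((n - i - j) * (n - i - j - 1) / 2) / qFact q (n - i - j)))) := by
    have h1 := qFact_ne q hq i
    have h2 := qFact_ne q hq j
    have h3 := qFact_ne q hq (n - i - j)
    field_simp
  rw [h]
  simp only [map_mul]
  ring

theorem monomial_xy {K : Type*} [Field K] (j k : ℕ) (c : K) :
    (monomial (Finsupp.single (0 : Fin 2) j + Finsupp.single (1 : Fin 2) k) c :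
      MvPolynomial (Fin 2) K) = C c * (X 0 ^ j * X 1 ^ k) := by
  rw [X_pow_eq_monomial, X_pow_eq_monomial, monomial_mul, C_mul_monomial]
  simp

theorem appell_eq_coeff {K : Type*} [Field K] (q : K) (hq : ∀ n : ℕ, 1 ≤ n → qInt q n ≠ 0)
    (a : ℕ → K) (n : ℕ) :
    appell q a n = C (qFact q n) * PowerSeries.coeff n (qGen q a 1 *
      (qGen q (fun _ => 1) (X 0) * qGen q (fun k => q ^ (k * (k - 1) / 2)) (X 1))) := by
  rw [coeff_qGen3 q hq]
  simp only [appell, monomial_xy]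

theorem substX_appell_eq_coeff {K : Type*} [Field K] (q : K)
    (hq : ∀ n : ℕ, 1 ≤ n → qInt q n ≠ 0) (a : ℕ → K) (n : ℕ) :
    substX q (appell q a n) = C (qFact q n) * PowerSeries.coeff n (qGen q a 1 *
      (qGen q (fun _ => 1) (C q * X 0) * qGen q (fun k => q ^ (k * (k - 1) / 2)) (X 1))) := by
  rw [coeff_qGen3 q hq]
  simp only [appell, monomial_xy, substX, map_sum, map_mul, map_pow, aeval_X, aeval_C,
    algebraMap_eq]
  simp

theorem coeff_mul_exp {K : Type*} [Field K] (q : K) (a : ℕ → K) (n : ℕ) 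
    (hq : ∀ n : ℕ, 1 ≤ n → qInt q n ≠ 0) :
    PowerSeries.coeff n (qGen q a 1 * qGen q (fun _ => 1) 1) =
      C ((∑ k ∈ Finset.range (n + 1), qChoose q n k * a k) / qFact q n) := by
  rw [PowerSeries.coeff_mul, Finset.Nat.sum_antidiagonal_eq_sum_range_succ_mk, Finset.sum_div,
    map_sum]
  refine Finset.sum_congr rfl fun i hi => ?_
  simp only [qGen, PowerSeries.coeff_mk, one_pow, mul_one, ← map_mul, qChoose]
  congr 1
  have h1 := qFact_ne q hq i
  have h2 := qFact_ne q hq n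
  have h3 := qFact_ne q hq (n - i)
  field_simp

/-- Recurrence relation for 2D `q`-Euler polynomials. -/
theorem qEuler2D_recurrence
    {K : Type*} [Field K] [CharZero K] (q : K) (hq0 : q ≠ 0) (hq1 : q ≠ 1)
    (hq : ∀ n : ℕ, 1 ≤ n → qInt q n ≠ 0)
    (E : ℕ → K) (hE0 : E 0 = 1)
    (hE : ∀ n : ℕ, 1 ≤ n → E n + ∑ k ∈ Finset.range (n + 1), qChoose q n k * E k = 0)
    (αE βE : ℕ → K)
    (hαE : ∀ k : ℕ, 1 ≤ k →
      αE k = -(qInt q k / 2) * ∑ j ∈ Finset.range k, qChoose q (k - 1) j * E j)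
    (hβE0 : βE 0 = 1)
    (hβE : ∀ m : ℕ, 1 ≤ m →
      βE m = ((q - 1) * qInt q m / 2) * ∑ j ∈ Finset.range m, qChoose q (m - 1) j * E j)
    (n : ℕ) (hn : 1 ≤ n) :
    C (qInt q n) * substX q (appell q E n) =
      (∑ k ∈ Finset.Icc 1 n, C (qChoose q n k * q ^ (n - k)) *
        (C (αE k) + C (qInt q k * βE (k - 1)) * X 1) * appell q E (n - k)) +
      C (qInt q n * q ^ n) * X 0 * appell q E (n - 1) := by
  have hf := qFact_ne q hq
  have hf0 := qFact_zero' q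
  set A := qGen q E 1 with hA
  set e1 := qGen q (fun _ => 1) 1 with he1
  set ex := qGen q (fun _ => 1) (X 0) with hex
  set g : ℕ → K := fun k => q ^ (k * (k - 1) / 2) with hg
  set ey := qGen q g (X 1) with hey
  set Aq := qGen q E (C q * 1) with hAq
  set e1q := qGen q (fun _ => 1) (C q * 1) with he1q
  set exq := qGen q (fun _ => 1) (C q * X 0) with hexq
  set exqq := qGen q (fun _ => 1) (C q * (C q * X 0)) with hexqq
  set eyq := qGen q g (C q * X 1) with heyq
  set α' : PowerSeries (MvPolynomial (Fin 2) K) :=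
    PowerSeries.mk fun k => C (if k = 0 then 0 else αE k / qFact q k) with hα'
  set β' : PowerSeries (MvPolynomial (Fin 2) K) :=
    PowerSeries.mk fun k => C (βE k / qFact q k) with hβ'
  set c : PowerSeries (MvPolynomial (Fin 2) K) := PowerSeries.C (C (q - 1)) with hc
  have R1 : A * (1 + e1) = 2 := by
    have h2 : (2 : PowerSeries (MvPolynomial (Fin 2) K)) = PowerSeries.C (C 2) := by
      rw [map_ofNat C 2, map_ofNat PowerSeries.C 2]
    ext1 m
    rw [mul_add, mul_one, map_add, hA, he1, coeff_mul_exp q E m hq, h2, PowerSeries.coeff_C]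
    simp only [qGen, PowerSeries.coeff_mk, one_pow, mul_one]
    rw [← map_add, ← add_div]
    split_ifs with h
    · subst h
      simp [hE0, hf0, qChoose]
      rw [one_add_one_eq_two]
      exact (map_ofNat (C : K →+* MvPolynomial (Fin 2) K) 2).symm
    · rw [hE m (by omega)]
      simp
  have R1q : Aq * (1 + e1q) = 2 := by
    have := congrArg (PowerSeries.rescale (C q)) R1
    rw [map_mul, map_add, map_one, hA, he1, rescale_qGen, rescale_qGen] at this
    rw [this]
    exact map_ofNat _ 2
  have R2 : e1q = e1 * (1 + c * PowerSeries.X) := by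
    rw [he1q, qGen_exp q hq, mul_one]
  have R3 : 2 * α' = - (A * e1 * PowerSeries.X) := by
    have h2 : (2 : PowerSeries (MvPolynomial (Fin 2) K)) = PowerSeries.C (C 2) := by
      rw [map_ofNat C 2, map_ofNat PowerSeries.C 2]
    ext1 m
    rw [h2, PowerSeries.coeff_C_mul, map_neg]
    cases m with
    | zero => simp [hα']
    | succ m =>
      rw [PowerSeries.coeff_succ_mul_X, hA, he1, coeff_mul_exp q E m hq, hα',
        PowerSeries.coeff_mk, ← map_mul, ← map_neg]
      congr 1
      rw [if_neg (by omega), hαE (m + 1) (by omega), qFact_succ', Nat.add_sub_cancel]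
      have h1 := hf m
      have h2 := hq (m + 1) (by omega)
      field_simp
  have R4 : β' = 1 - c * α' := by
    ext1 m
    rw [map_sub, hc, PowerSeries.coeff_C_mul, hα', hβ', PowerSeries.coeff_mk,
      PowerSeries.coeff_mk, PowerSeries.coeff_one]
    split_ifs with h
    · subst h
      simp [hβE0, hf0]
    · rw [← map_mul, zero_sub, ← map_neg]
      congr 1
      rw [hβE m (by omega), hαE m (by omega)]
      ring
  have R5 : exqq = exq * (1 + c * PowerSeries.C (C q * X 0) * PowerSeries.X) := by
    rw [hexqq, qGen_exp q hq, map_mul PowerSeries.C (C (q-1))]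
  have R6 : ey = eyq * (1 - c * PowerSeries.C (X 1) * PowerSeries.X) := by
    rw [hey, hg, qGen_exp2 q hq, map_mul PowerSeries.C (C (q-1))]
  have two : IsUnit (2 : PowerSeries (MvPolynomial (Fin 2) K)) := by
    have h2 : (2 : PowerSeries (MvPolynomial (Fin 2) K)) = PowerSeries.C (C 2) := by
      rw [map_ofNat C 2, map_ofNat PowerSeries.C 2]
    rw [h2]
    exact ((IsUnit.mk0 (2 : K) two_ne_zero).map C).map PowerSeries.C
  have R7 : Aq * β' = A := by
    refine two.mul_left_cancel ?_
    rw [R2] at R1q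
    rw [R4]
    linear_combination A * R1q - Aq * R1 - Aq * c * R3
  have key : c * ((α' + PowerSeries.C (X 1) * β' * PowerSeries.X) * (Aq * (exq * eyq)) +
      PowerSeries.C (C q * X 0) * (Aq * (exq * eyq)) * PowerSeries.X) =
      Aq * (exqq * eyq) - A * (exq * ey) := by
    rw [R5, R6, ← R7, R4]
    ring
  have F1 : Aq * (exqq * eyq) = PowerSeries.rescale (C q) (A * (exq * ey)) := by
    simp only [map_mul, hA, hexq, hey, rescale_qGen]
    rfl
  have F2 : Aq * (exq * eyq) = PowerSeries.rescale (C q) (A * (ex * ey)) := by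
    simp only [map_mul, hA, hex, hey, rescale_qGen]
    rfl
  have S1 : ∀ m, appell q E m = C (qFact q m) * PowerSeries.coeff m (A * (ex * ey)) :=
    fun m => appell_eq_coeff q hq E m
  have S2 : substX q (appell q E n) = C (qFact q n) * PowerSeries.coeff n (A * (exq * ey)) :=
    substX_appell_eq_coeff q hq E n
  have key' := congrArg (PowerSeries.coeff n) key
  rw [F1, F2, map_sub, hc, PowerSeries.coeff_C_mul, PowerSeries.coeff_rescale, map_add] at key'
  have T1 : C (qFact q n) * PowerSeries.coeff n
      ((α' + PowerSeries.C (X 1) * β' * PowerSeries.X) *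
        PowerSeries.rescale (C q) (A * (ex * ey))) =
      ∑ k ∈ Finset.Icc 1 n, C (qChoose q n k * q ^ (n - k)) *
        (C (αE k) + C (qInt q k * βE (k - 1)) * X 1) * appell q E (n - k) := by
    rw [PowerSeries.coeff_mul, Finset.Nat.sum_antidiagonal_eq_sum_range_succ_mk,
      Finset.sum_range_succ', mul_add, Finset.mul_sum, Finset.range_eq_Ico,
      Finset.sum_Ico_add' (fun k => C (qFact q n) * (PowerSeries.coeff k
        (α' + PowerSeries.C (X 1) * β' * PowerSeries.X) * PowerSeries.coeff (n - k)
        (PowerSeries.rescale (C q) (A * (ex * ey))))) 0 n 1]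
    have z : PowerSeries.coeff 0 (α' + PowerSeries.C (X 1) * β' * PowerSeries.X) = 0 := by
      simp [hα']
    rw [z, zero_mul, mul_zero, add_zero]
    refine Finset.sum_congr (by ext; simp) fun k hk => ?_
    have hk1 := (Finset.mem_Icc.1 hk).1
    obtain ⟨m, rfl⟩ : ∃ m, k = m + 1 := ⟨k - 1, by omega⟩
    rw [map_add, PowerSeries.coeff_succ_mul_X, PowerSeries.coeff_C_mul, hα', hβ',
      PowerSeries.coeff_mk, PowerSeries.coeff_mk, if_neg (by omega), PowerSeries.coeff_rescale,
      S1, Nat.add_sub_cancel]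
    have h1 := hf m
    have h2 := hq (m + 1) (by omega)
    have h3 := hf (n - (m + 1))
    have u : qFact q n * (αE (m + 1) / qFact q (m + 1)) =
        qChoose q n (m + 1) * αE (m + 1) * qFact q (n - (m + 1)) := by
      rw [qChoose, qFact_succ']
      field_simp
    have v : qFact q n * (βE m / qFact q m) =
        qChoose q n (m + 1) * (qInt q (m + 1) * βE m) * qFact q (n - (m + 1)) := by
      rw [qChoose, qFact_succ']
      field_simp
    have u' := congrArg (C (σ := Fin 2)) u
    have v' := congrArg (C (σ := Fin 2)) v
    simp only [map_mul, map_pow] at u' v' ⊢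
    linear_combination (C q ^ (n - (m + 1)) *
      PowerSeries.coeff (n - (m + 1)) (A * (ex * ey))) * (u' + X 1 * v')
  have T2 : C (qFact q n) * PowerSeries.coeff n (PowerSeries.C (C q * X 0) *
        PowerSeries.rescale (C q) (A * (ex * ey)) * PowerSeries.X) =
      C (qInt q n * q ^ n) * X 0 * appell q E (n - 1) := by
    obtain ⟨m, rfl⟩ : ∃ m, n = m + 1 := ⟨n - 1, by omega⟩
    rw [PowerSeries.coeff_succ_mul_X, PowerSeries.coeff_C_mul, PowerSeries.coeff_rescale,
      Nat.add_sub_cancel, S1, qFact_succ']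
    simp only [map_mul, map_pow]
    ring
  rw [← T1, ← T2, S2]
  have hc0 : (C (q - 1) : MvPolynomial (Fin 2) K) ≠ 0 := by
    rw [Ne, C_eq_zero]
    exact sub_ne_zero.2 hq1
  refine mul_left_cancel₀ hc0 ?_
  have hG := congrArg (C (σ := Fin 2)) (qInt_geom q n)
  rw [map_mul, map_sub C (q ^ n) 1, map_pow, map_one] at hG
  linear_combination C (qFact q n) * PowerSeries.coeff n (A * (exq * ey)) * hG
    - C (qFact q n) * key'
end
end
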